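/- Let R be a Noetherian ring, 𝔞 an ideal with dim R/𝔞 = 1, and M an R-module with Supp(M) ⊆ V(𝔞). If Ext^i_R(R/𝔞, M) is finitely generated for all i ≤ cd(𝔞, M) + 1, then Ext^i_R(R/𝔞, M) is finitely generated for all i ≥ 0, i.e., M is 𝔞-cofinite. -/

import Mathlib

open CategoryTheory

universe u

variable (R : Type u) [CommRing R]

/-- The `i`-th Ext module `Ext^i_R(N, M)` of `R`-modules. -/
noncomputable def extModule (i : ℕ) (N M : ModuleCat.{u} R) : ModuleCat.{u} R :=
  ((Ext R (ModuleCat.{u} R) i).obj (Opposite.op N)).obj M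

/-- A module is weakly Laskerian if every quotient has finitely many associated primes. -/
def IsWeaklyLaskerian (M : Type u) [AddCommGroup M] [Module R M] : Prop :=
  ∀ N : Submodule R M, (associatedPrimes R (M ⧸ N)).Finite

/-- `M` is `𝔞`-cofinite: `Supp M ⊆ V(𝔞)` and all `Ext^i_R(R/𝔞, M)` are finitely generated. -/
def IsCofinite (𝔞 : Ideal R) (M : ModuleCat.{u} R) : Prop :=
  Module.support R M ⊆ PrimeSpectrum.zeroLocus (𝔞 : Set R) ∧
    ∀ i : ℕ, Module.Finite R (extModule R i (ModuleCat.of R (R ⧸ 𝔞)) M)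

/-- `M` is `𝔞`-weakly cofinite: `Supp M ⊆ V(𝔞)` and all `Ext^i_R(R/𝔞, M)` are weakly
Laskerian. -/
def IsWeaklyCofinite (𝔞 : Ideal R) (M : ModuleCat.{u} R) : Prop :=
  Module.support R M ⊆ PrimeSpectrum.zeroLocus (𝔞 : Set R) ∧
    ∀ i : ℕ, IsWeaklyLaskerian R (extModule R i (ModuleCat.of R (R ⧸ 𝔞)) M)

/-- The Krull dimension of the support of a module. -/
noncomputable def suppDim (M : Type u) [AddCommGroup M] [Module R M] : WithBot ℕ∞ :=
  Order.krullDim (Module.support R M)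

/-- The cohomological dimension `cd(𝔞, M) = sup {i | H^i_𝔞(M) ≠ 0}`, as an element of `ℕ∞`. -/
noncomputable def cohomologicalDim (𝔞 : Ideal R) (M : ModuleCat.{u} R) : ℕ∞ :=
  ⨆ i ∈ {i : ℕ | Nontrivial ((localCohomology 𝔞 i).obj M)}, (i : ℕ∞)

/-- `p` is an attached prime of `M`: `p` is prime and is the annihilator of a quotient
of `M`. -/
def IsAttachedPrime (M : Type u) [AddCommGroup M] [Module R M] (p : Ideal R) : Prop :=
  p.IsPrime ∧ ∃ N : Submodule R M, p = Module.annihilator R (M ⧸ N)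

/-!
The socle of `M` with respect to an ideal `I` is `0 :_M I = Hom(A ⧸ I, M)`. Modules are handled by
Noetherian induction on the annihilator: if `x ∈ I` does not kill `M`, then `0 :_M x` has a larger
annihilator, so it is cofinite, and `M` is cofinite as soon as `xM` or `M ⧸ xM` is, the latter
because `x` kills `Ext(A ⧸ I, M)`. A first reduction replaces `M` by `xM` until multiplication by
`x` is surjective after inverting the elements outside the minimal primes of `I`; this happens after
finitely many steps because the localized module is Artinian, its socle being finitely generated
and supported at maximal ideals. A second reduction leaves `Q = M ⧸ xM`, whose socle is finitely
generated and vanishes at the minimal primes of `I`. As `dim A ⧸ I ≤ 1`, the socle of `Q` has finite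
length, so `Q` is Artinian, and the same induction, with nothing inverted, shows that it is
cofinite.
-/

universe v

/-! ### Power torsion and Artinian modules -/

theorem exists_forall_eq_of_antitone_antitone {α : Type*} [PartialOrder α] [WellFoundedLT α]
    {f : ℕ → ℕ → α} (hf : Antitone f) (hf' : ∀ j, Antitone (f j)) :
    ∃ k, ∀ m, k ≤ m → ∀ j, f j k = f j m := by
  obtain ⟨n, hn⟩ := WellFoundedLT.antitone_chain_condition (f := fun i ↦ f i i)
    fun i j hij ↦ (hf hij j).trans (hf' i hij)
  have hdiag : ∀ j k, n ≤ j → n ≤ k → f j k = f n n := fun j k hj hk ↦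
    le_antisymm ((hf hj k).trans (hf' n hk)) <|
      calc f n n = f (max j k) (max j k) := hn _ (hj.trans (le_max_left j k))
        _ ≤ f j (max j k) := hf (le_max_left j k) _
        _ ≤ f j k := hf' j (le_max_right j k)
  choose c hc using fun j ↦ WellFoundedLT.antitone_chain_condition (hf' j)
  refine ⟨max n ((Finset.range n).sup c), fun m hm j ↦ ?_⟩
  rcases lt_or_ge j n with hj | hj
  · have hcj : c j ≤ max n ((Finset.range n).sup c) :=
      (Finset.le_sup (Finset.mem_range.mpr hj)).trans (le_max_right _ _)
    rw [← hc j _ hcj, ← hc j _ (hcj.trans hm)]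
  · rw [hdiag j _ hj (le_max_left _ _), hdiag j _ hj ((le_max_left _ _).trans hm)]

section Artinian

variable {A : Type u} [CommRing A] {L : Type v} [AddCommGroup L] [Module A L]

open LinearMap Submodule

theorem le_of_forall_map_lsmul_pow_inf_ker_le (x : A) (htor : ∀ l : L, ∃ n : ℕ, x ^ n • l = 0)
    {N N' : Submodule A L} (hN : N' ≤ N)
    (h : ∀ j, N.map (lsmul A L (x ^ j)) ⊓ ker (lsmul A L x) ≤ N'.map (lsmul A L (x ^ j))) :
    N ≤ N' := by
  have mem_of_pow_smul : ∀ j, ∀ l ∈ N, x ^ j • l = 0 → l ∈ N' := by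
    intro j
    induction j with
    | zero => intro l _ hl; simp_all
    | succ j ih =>
      intro l hl hlj
      obtain ⟨l', hl', hjl'⟩ := h j ⟨⟨l, hl, rfl⟩, by
        rwa [SetLike.mem_coe, mem_ker, lsmul_apply, lsmul_apply, smul_smul, ← pow_succ']⟩
      have hsub : l - l' ∈ N' := ih _ (N.sub_mem hl (hN hl')) <| by
        rw [smul_sub, sub_eq_zero]; exact hjl'.symm
      simpa using N'.add_mem hsub hl'
  intro l hl
  obtain ⟨n, hn⟩ := htor l
  exact mem_of_pow_smul n l hl hn

theorem isArtinian_of_isArtinian_ker_lsmul (x : A) [IsArtinian A (ker (lsmul A L x))]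
    (htor : ∀ l : L, ∃ n : ℕ, x ^ n • l = 0) : IsArtinian A L := by
  rw [← monotone_stabilizes_iff_artinian]
  intro N
  let S (j k : ℕ) : Submodule A (ker (lsmul A L x)) :=
    ((OrderDual.ofDual (N k)).map (lsmul A L (x ^ j))).comap (ker (lsmul A L x)).subtype
  have hS : Antitone S := by
    rintro i j hij k ⟨_, _⟩ ⟨l, hl, rfl⟩
    refine ⟨x ^ (j - i) • l, smul_mem _ _ hl, ?_⟩
    simp [smul_smul, ← pow_add, hij]
  have hS' : ∀ j, Antitone (S j) := fun j k m hkm ↦ comap_mono (map_mono (N.monotone hkm))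
  obtain ⟨k, hk⟩ := exists_forall_eq_of_antitone_antitone hS hS'
  refine ⟨k, fun m hm ↦ le_antisymm (N.monotone hm) ?_⟩
  refine le_of_forall_map_lsmul_pow_inf_ker_le x htor (N.monotone hm) fun j l hl ↦ ?_
  have : (⟨l, hl.2⟩ : ker (lsmul A L x)) ∈ S j k := hl.1
  rwa [hk m hm] at this

end Artinian

theorem induction_on_annihilator {A : Type u} [CommRing A] [IsNoetherianRing A] (I : Ideal A)
    {C : ∀ (M : Type v) [AddCommGroup M] [Module A M], Prop}
    (base : ∀ (M : Type v) [AddCommGroup M] [Module A M], I ≤ Module.annihilator A M → C M)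
    (step : ∀ (M : Type v) [AddCommGroup M] [Module A M], ∀ x ∈ I,
      (∀ (L : Type v) [AddCommGroup L] [Module A L],
        Module.annihilator A M ≤ Module.annihilator A L →
          C (LinearMap.ker (LinearMap.lsmul A L x))) → C M)
    (M : Type v) [AddCommGroup M] [Module A M] : C M := by
  induction hJ : Module.annihilator A M using WellFoundedGT.induction generalizing M with
  | ind J ih =>
    subst hJ
    by_cases hI : I ≤ Module.annihilator A M
    · exact base M hI
    obtain ⟨x, hxI, hxM⟩ := SetLike.not_le_iff_exists.mp hI
    refine step M x hxI fun L _ _ hL ↦ ih _ (lt_of_le_of_ne ?_ ?_) _ rfl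
    · exact hL.trans
        (LinearMap.annihilator_le_of_injective _ (Submodule.subtype_injective _))
    · intro h
      refine hxM (h ▸ Module.mem_annihilator.mpr fun l ↦ Subtype.ext ?_)
      exact l.2

section IsPowTorsion

open Submodule PrimeSpectrum

theorem torsionBySet_eq_top_of_le_annihilator {A : Type u} [CommRing A] {I : Ideal A} {M : Type v}
    [AddCommGroup M] [Module A M] (h : I ≤ Module.annihilator A M) :
    torsionBySet A M (I : Set A) = ⊤ :=
  (Module.isTorsionBySet_iff_torsionBySet_eq_top _).mp fun m a ↦ Module.mem_annihilator.mp (h a.2) m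

/-- `M` is `I`-power torsion: each element of `M` is killed by some power of each element of `I`.
When `I` is finitely generated this says `M = Γ_I(M)`, and it follows from `Supp M ⊆ V(I)`. -/
def IsPowTorsion {A : Type u} [CommRing A] (I : Ideal A) (M : Type v) [AddCommGroup M]
    [Module A M] : Prop :=
  ∀ x ∈ I, ∀ m : M, ∃ n : ℕ, x ^ n • m = 0

namespace IsPowTorsion

variable {A : Type u} [CommRing A] {I : Ideal A} {M N : Type v} [AddCommGroup M] [Module A M]
  [AddCommGroup N] [Module A N]

theorem of_support_subset (h : Module.support A M ⊆ zeroLocus (I : Set A)) :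
    IsPowTorsion I M := by
  intro x hx m
  have hm := (Module.support_subset_of_injective (span A {m}).subtype
    (subtype_injective _)).trans h
  rw [Module.support_eq_zeroLocus, zeroLocus_subset_zeroLocus_iff] at hm
  obtain ⟨n, hn⟩ := hm hx
  exact ⟨n, (mem_annihilator_span_singleton m _).mp hn⟩

theorem of_injective (hM : IsPowTorsion I M) (f : N →ₗ[A] M) (hf : Function.Injective f) :
    IsPowTorsion I N := by
  intro x hx m
  obtain ⟨n, hn⟩ := hM x hx (f m)
  exact ⟨n, hf (by rw [map_smul, hn, map_zero])⟩

theorem of_surjective (hM : IsPowTorsion I M) (f : M →ₗ[A] N) (hf : Function.Surjective f) :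
    IsPowTorsion I N := by
  intro x hx
  refine hf.forall.mpr fun m ↦ ?_
  obtain ⟨n, hn⟩ := hM x hx m
  exact ⟨n, by rw [← map_smul, hn, map_zero]⟩

theorem localizedModule (hM : IsPowTorsion I M) (S : Submonoid A) :
    IsPowTorsion (I.map (algebraMap A (Localization S))) (LocalizedModule S M) := by
  intro y hy z
  have hle : I ≤ ((Ideal.radical (span (Localization S) {z}).annihilator).comap
      (algebraMap A (Localization S))) := by
    intro x hx
    induction z using LocalizedModule.induction_on with
    | h m s =>
      obtain ⟨n, hn⟩ := hM x hx m
      refine ⟨n, (mem_annihilator_span_singleton _ _).mpr ?_⟩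
      rw [← map_pow, algebraMap_smul, LocalizedModule.smul'_mk, hn, LocalizedModule.zero_mk]
  obtain ⟨n, hn⟩ := Ideal.map_le_iff_le_comap.mpr hle hy
  exact ⟨n, (mem_annihilator_span_singleton z _).mp hn⟩

theorem isArtinian [IsNoetherianRing A] (hM : IsPowTorsion I M)
    (hsoc : IsArtinian A (torsionBySet A M (I : Set A))) : IsArtinian A M := by
  refine induction_on_annihilator I
    (C := fun M _ _ ↦ IsPowTorsion I M → IsArtinian A (torsionBySet A M (I : Set A)) →
      IsArtinian A M) ?_ ?_ M hM hsoc
  · intro M _ _ hIM _ hsoc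
    rw [torsionBySet_eq_top_of_le_annihilator hIM] at hsoc
    exact isArtinian_of_linearEquiv topEquiv
  · intro M _ _ x hx ih hM hsoc
    let K := LinearMap.ker (LinearMap.lsmul A M x)
    have : IsArtinian A K := by
      refine ih M le_rfl (hM.of_injective _ K.subtype_injective) ?_
      refine isArtinian_of_injective
        (K.subtype.restrict (p := torsionBySet A K I) (q := torsionBySet A M I) fun k hk ↦ ?_) ?_
      · exact (mem_torsionBySet_iff _ _).mpr fun a ↦
          congrArg Subtype.val ((mem_torsionBySet_iff _ _).mp hk a)
      · exact (LinearMap.injective_restrict_iff _).mpr (by simp [K.ker_subtype])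
    exact isArtinian_of_isArtinian_ker_lsmul x (hM x hx)

end IsPowTorsion

end IsPowTorsion

section Dimension

theorem isArtinian_of_isMaximal_of_mem_support {A : Type u} [CommRing A] [IsNoetherianRing A]
    {N : Type v} [AddCommGroup N] [Module A N] [Module.Finite A N]
    (h : ∀ p ∈ Module.support A N, p.asIdeal.IsMaximal) : IsArtinian A N := by
  rw [Module.support_eq_zeroLocus] at h
  have hdim : Ring.KrullDimLE 0 (A ⧸ Module.annihilator A N) := by
    rw [Ring.krullDimLE_iff, ringKrullDim_quotient, Nat.cast_zero,
      Order.krullDim_nonpos_iff_forall_isMax]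
    exact fun p q hpq ↦ (PrimeSpectrum.isMax_iff.mpr (h p p.2)) hpq
  have : IsArtinianRing (A ⧸ Module.annihilator A N) :=
    isArtinianRing_iff_isNoetherianRing_krullDimLE_zero.mpr ⟨inferInstance, hdim⟩
  have ht : Module.IsTorsionBySet A N (Module.annihilator A N) :=
    Module.isTorsionBySet_annihilator A N
  let := ht.module
  have : IsScalarTower A (A ⧸ Module.annihilator A N) N := ht.isScalarTower
  have : Module.Finite (A ⧸ Module.annihilator A N) N :=
    Module.Finite.of_restrictScalars_finite A _ _
  have : IsArtinian (A ⧸ Module.annihilator A N) N := inferInstance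
  exact isArtinian_of_surjective_algebraMap (R := A ⧸ Module.annihilator A N)
    Ideal.Quotient.mk_surjective

theorem mem_minimalPrimes_or_isMaximal {A : Type u} [CommRing A] {I : Ideal A}
    (hdim : ringKrullDim (A ⧸ I) ≤ 1) {q : Ideal A} [hq : q.IsPrime] (hIq : I ≤ q) :
    q ∈ I.minimalPrimes ∨ q.IsMaximal := by
  rw [ringKrullDim_quotient, Order.krullDim_le_one_iff] at hdim
  refine (hdim ⟨⟨q, hq⟩, hIq⟩).imp (fun hmin ↦ ⟨⟨hq, hIq⟩, ?_⟩) fun hmax ↦ ?_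
  · exact fun p hp hpq ↦ hmin (b := ⟨⟨p, hp.1⟩, hp.2⟩) hpq
  · have hmax' : IsMax (⟨q, hq⟩ : PrimeSpectrum A) :=
      fun p hqp ↦ hmax (b := ⟨p, hIq.trans hqp⟩) hqp
    exact PrimeSpectrum.isMax_iff.mp hmax'

end Dimension

section Localization

open Submodule

variable {A : Type u} [CommRing A] (I : Ideal A)

/-- The elements outside every minimal prime of `I`. Localizing at them leaves only the minimal
primes of `I` in `V(I)`. -/
def minimalPrimesCompl : Submonoid A where
  carrier := {s | ∀ p ∈ I.minimalPrimes, s ∉ p}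
  one_mem' _ hp := hp.1.1.one_notMem
  mul_mem' ha hb p hp := hp.1.1.mul_notMem (ha p hp) (hb p hp)

theorem comap_mem_minimalPrimes [IsNoetherianRing A]
    {q : Ideal (Localization (minimalPrimesCompl I))} [hq : q.IsPrime]
    (h : I.map (algebraMap A (Localization (minimalPrimesCompl I))) ≤ q) :
    q.comap (algebraMap A (Localization (minimalPrimesCompl I))) ∈ I.minimalPrimes := by
  let S := minimalPrimesCompl I
  have hdisj := ((IsLocalization.isPrime_iff_isPrime_disjoint S (Localization S) q).mp hq).2
  have hcover : (q.comap (algebraMap A (Localization S)) : Set A) ⊆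
      ⋃ p ∈ I.minimalPrimes, (p : Set A) := by
    intro a ha
    by_contra hcon
    exact Set.disjoint_left.mp hdisj (fun p hp hap ↦ hcon (Set.mem_biUnion hp hap)) ha
  obtain ⟨p, hp, hqp⟩ := (Ideal.subset_union_prime_finite (f := id)
    (I.finite_minimalPrimes_of_isNoetherianRing A) 0 0 fun p hp _ _ ↦ hp.1.1).mp hcover
  have hpq := hp.2 ⟨hq.comap _, Ideal.map_le_iff_le_comap.mp h⟩ hqp
  exact le_antisymm hqp hpq ▸ hp

theorem isMaximal_of_map_le [IsNoetherianRing A]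
    {q : Ideal (Localization (minimalPrimesCompl I))} [hq : q.IsPrime]
    (h : I.map (algebraMap A (Localization (minimalPrimesCompl I))) ≤ q) : q.IsMaximal := by
  obtain ⟨m, hm, hqm⟩ := Ideal.exists_le_maximal q hq.ne_top
  have hle : m.comap (algebraMap A _) ≤ q.comap (algebraMap A _) :=
    (comap_mem_minimalPrimes I (h.trans hqm)).2 (comap_mem_minimalPrimes I h).1
      (Ideal.comap_mono hqm)
  have hmq : m ≤ q := (IsLocalization.orderEmbedding (minimalPrimesCompl I) _).le_iff_le.mp hle
  rwa [le_antisymm hqm hmq]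

theorem exists_mem_annihilator_of_forall_exists_smul_eq_zero {S : Submonoid A} {N : Type v}
    [AddCommGroup N] [Module A N] [Module.Finite A N] (h : ∀ n : N, ∃ s ∈ S, s • n = 0) :
    ∃ s ∈ S, s ∈ Module.annihilator A N := by
  obtain ⟨T, hT⟩ := Module.Finite.fg_top (R := A) (M := N)
  choose s hsS hs using h
  refine ⟨∏ n ∈ T, s n, S.prod_mem fun n _ ↦ hsS n, ?_⟩
  rw [← Submodule.annihilator_top, ← hT, mem_annihilator_span]
  rintro ⟨n, hn⟩
  obtain ⟨c, hc⟩ := Finset.dvd_prod_of_mem s hn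
  rw [hc, mul_comm, mul_smul, hs, smul_zero]

theorem exists_smul_pow_smul_eq {S : Submonoid A} {M : Type v} [AddCommGroup M] [Module A M]
    [IsArtinian (Localization S) (LocalizedModule S M)] (x : A) :
    ∃ k, ∀ m : M, ∃ s ∈ S, ∃ m' : M, s • x ^ k • m = x ^ (k + 1) • m' := by
  obtain ⟨k, hk⟩ := IsArtinian.range_smul_pow_stabilizes (LocalizedModule S M)
    (algebraMap A (Localization S) x)
  refine ⟨k, fun m ↦ ?_⟩
  obtain ⟨z, hz⟩ := (hk _ k.le_succ).le ⟨LocalizedModule.mk m 1, rfl⟩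
  induction z using LocalizedModule.induction_on with
  | h m' s =>
    simp only [LinearMap.smul_apply, LinearMap.id_apply, ← map_pow, algebraMap_smul,
      LocalizedModule.smul'_mk, LocalizedModule.mk_eq, one_smul] at hz
    obtain ⟨u, hu⟩ := hz
    refine ⟨u * s, S.mul_mem u.2 s.2, u • m', ?_⟩
    rw [mul_smul, smul_comm _ u m']
    exact hu.symm

open IsLocalizedModule in
theorem torsionBySet_localizedModule_eq_localized' (hI : I.FG) (S : Submonoid A) (M : Type v)
    [AddCommGroup M] [Module A M] :
    torsionBySet (Localization S) (LocalizedModule S M)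
        (I.map (algebraMap A (Localization S)) : Set (Localization S)) =
      (torsionBySet A M (I : Set A)).localized' (Localization S) S
        (LocalizedModule.mkLinearMap S M) := by
  rw [Ideal.map, Ideal.span, ← torsionBySet_eq_torsionBySet_span]
  ext z
  obtain ⟨⟨m, s⟩, rfl⟩ := mk'_surjective S (LocalizedModule.mkLinearMap S M) z
  simp only [Function.uncurry_apply_pair, mem_torsionBySet_iff, mem_localized',
    Set.forall_mem_image, Subtype.forall]
  constructor
  · intro h
    have hfin : Module.Finite A (Submodule.map (LinearMap.toSpanSingleton A M m) I) :=
      Module.Finite.iff_fg.mpr (Submodule.FG.map _ hI)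
    obtain ⟨w, hwS, hw⟩ := exists_mem_annihilator_of_forall_exists_smul_eq_zero (S := S)
      (N := Submodule.map (LinearMap.toSpanSingleton A M m) I) <| by
        rintro ⟨_, a, ha, rfl⟩
        have ham := h ha
        rw [algebraMap_smul, ← mk'_smul, mk'_eq_zero'] at ham
        obtain ⟨u, hu⟩ := ham
        exact ⟨u, u.2, Subtype.ext hu⟩
    refine ⟨w • m, fun a ha ↦ ?_, _, mk'_cancel_left _ m ⟨w, hwS⟩ s⟩
    rw [smul_comm]
    exact congrArg Subtype.val (Module.mem_annihilator.mp hw ⟨_, a, ha, rfl⟩)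
  · rintro ⟨m', hm', s', heq⟩ a ha
    rw [← heq, algebraMap_smul, ← mk'_smul, hm' a ha, mk'_zero]

variable {I} in
theorem IsPowTorsion.isArtinian_localizedModule [IsNoetherianRing A] {M : Type v} [AddCommGroup M]
    [Module A M] (hM : IsPowTorsion I M) (hsoc : (torsionBySet A M (I : Set A)).FG) :
    IsArtinian (Localization (minimalPrimesCompl I))
      (LocalizedModule (minimalPrimesCompl I) M) := by
  let S := minimalPrimesCompl I
  have : IsNoetherianRing (Localization S) := IsLocalization.isNoetherianRing S _ inferInstance
  have hfin : Module.Finite A (torsionBySet A M (I : Set A)) := Module.Finite.iff_fg.mpr hsoc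
  refine (hM.localizedModule S).isArtinian ?_
  set I' := I.map (algebraMap A (Localization S))
  have hfin' : Module.Finite (Localization S)
      (torsionBySet (Localization S) (LocalizedModule S M) (I' : Set (Localization S))) := by
    rw [torsionBySet_localizedModule_eq_localized' I I.fg_of_isNoetherianRing]
    exact Module.Finite.of_isLocalizedModule S ((torsionBySet A M (I : Set A)).toLocalized'
      (Localization S) S (LocalizedModule.mkLinearMap S M))
  refine isArtinian_of_isMaximal_of_mem_support fun p hp ↦ isMaximal_of_map_le I ?_
  refine le_trans (fun a ha ↦ ?_) (Module.annihilator_le_of_mem_support hp)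
  exact Module.mem_annihilator.mpr fun t ↦
    torsionBySet_isTorsionBySet (I' : Set (Localization S)) (x := t) (a := ⟨a, ha⟩)

end Localization

/-! ### Finite generation of Ext -/

section ExtComparison

open Abelian LinearMap

variable {A : Type u} [CommRing A] {X Y : ModuleCat.{u} A} (P : ProjectiveResolution X)

theorem extMk_zero_eq_zero_iff {m : ℕ} (hm : 0 + 1 = m) (f : P.complex.X 0 ⟶ Y)
    (hf : P.complex.d m 0 ≫ f = 0) : P.extMk f m hm hf = 0 ↔ f = 0 := by
  subst hm
  refine ⟨fun h ↦ ?_, fun h ↦ by subst h; exact P.extMk_zero 1 rfl⟩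
  simp only [← P.extEquivCohomologyClass.apply_eq_iff_eq,
    ProjectiveResolution.extEquivCohomologyClass_extMk,
    ProjectiveResolution.extEquivCohomologyClass_zero,
    CochainComplex.HomComplex.CohomologyClass.mk_eq_zero_iff] at h
  rw [CochainComplex.HomComplex.Cocycle.toSingleMk_mem_coboundaries_iff _ _ _ _ _ 1 (by simp)] at h
  obtain ⟨g, hg⟩ := h
  have hzero : Limits.IsZero (P.cochainComplex.X 1) :=
    P.cochainComplex.isZero_of_isStrictlyLE 0 1 (by lia)
  rw [hzero.eq_of_src g 0, Limits.comp_zero] at hg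
  rw [← cancel_epi (P.cochainComplexXIso (-(0 : ℕ)) 0 rfl).hom, Limits.comp_zero]
  exact hg.symm

theorem extMk_smul {n m : ℕ} (hm : n + 1 = m) (a : A) (f : P.complex.X n ⟶ Y)
    (hf : P.complex.d m n ≫ f = 0) (haf : P.complex.d m n ≫ (a • f) = 0) :
    P.extMk (a • f) m hm haf = a • P.extMk f m hm hf := by
  rw [Ext.smul_eq_comp_mk₀, P.extMk_comp_mk₀]
  simp only [Linear.comp_smul, Category.comp_id]

variable (Y) in
/-- The part `Hom(Pₙ₋₁, Y) → Hom(Pₙ, Y) → Hom(Pₙ₊₁, Y)` of the cochain complex `Hom(P, Y)`, in the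
indexing convention of `HomologicalComplex.sc` (at `n = 0` the first map is zero). -/
noncomputable abbrev homShortComplex (n : ℕ) : ShortComplex (ModuleCat.{u} A) :=
  (P.complex.linearYonedaObj A Y).sc n

variable (Y) in
/-- The class in `Extⁿ(X, Y)` of a cocycle `Pₙ ⟶ Y`. It presents the derived-category `Ext` as
cocycles modulo coboundaries. -/
noncomputable def extOfCocycle (n : ℕ) :
    ker (homShortComplex Y P n).g.hom →ₗ[A] Abelian.Ext X Y n where
  toFun z := P.extMk (z.1 : P.complex.X n ⟶ Y) ((ComplexShape.up ℕ).next n) (by simp) z.2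
  map_add' z w := (P.add_extMk _ _ _ _ _ _).symm
  map_smul' a z := extMk_smul P _ a (z.1 : P.complex.X n ⟶ Y) z.2 (a • z).2

theorem extOfCocycle_surjective (n : ℕ) : Function.Surjective (extOfCocycle Y P n) := by
  intro α
  obtain ⟨f, hf, h⟩ := P.extMk_surjective α ((ComplexShape.up ℕ).next n) (by simp)
  exact ⟨⟨f, hf⟩, h⟩

theorem ker_extOfCocycle (n : ℕ) :
    ker (extOfCocycle Y P n) = range (homShortComplex Y P n).moduleCatToCycles := by
  ext z
  cases n with
  | zero =>
    have hf : (homShortComplex Y P 0).f = 0 := (P.complex.linearYonedaObj A Y).shape _ _ (by simp)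
    have hz : z ∈ range (homShortComplex Y P 0).moduleCatToCycles ↔ z = 0 := by
      refine ⟨?_, fun h ↦ h ▸ zero_mem _⟩
      rintro ⟨y, rfl⟩
      exact Subtype.ext (congrArg (fun f ↦ f.hom y) hf)
    rw [hz, mem_ker, Subtype.ext_iff]
    exact extMk_zero_eq_zero_iff P (by simp) (z.1 : P.complex.X 0 ⟶ Y) z.2
  | succ n =>
    refine (P.extMk_eq_zero_iff (z.1 : P.complex.X (n + 1) ⟶ Y) _ (by simp) z.2
      ((ComplexShape.up ℕ).prev (n + 1)) (by simp)).trans ?_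
    exact exists_congr fun g ↦ ⟨fun h ↦ Subtype.ext h, fun h ↦ congrArg Subtype.val h⟩

variable (X Y) in
/-- The `Ext` computed as a right derived functor agrees with the `Ext` of the derived category:
both are the cohomology of `Hom(P, Y)` for a projective resolution `P` of `X`. -/
noncomputable def extModuleLinearEquiv (n : ℕ) : extModule A n X Y ≃ₗ[A] Abelian.Ext X Y n :=
  let P := projectiveResolution X
  (P.isoExt n Y ≪≫ (homShortComplex Y P n).moduleCatHomologyIso).toLinearEquiv ≪≫ₗ
    Submodule.quotEquivOfEq _ _ (ker_extOfCocycle P n).symm ≪≫ₗ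
    (extOfCocycle Y P n).quotKerEquivOfSurjective (extOfCocycle_surjective P n)

end ExtComparison

section ExtFinite

open Abelian LinearMap Submodule

variable {A : Type u} [CommRing A]

theorem isNoetherian_of_ker_le_range {M₁ M₂ M₃ : Type*} [AddCommGroup M₁] [AddCommGroup M₂]
    [AddCommGroup M₃] [Module A M₁] [Module A M₂] [Module A M₃] [IsNoetherian A M₁]
    [IsNoetherian A M₃] (f : M₁ →ₗ[A] M₂) (g : M₂ →ₗ[A] M₃) (h : ker g ≤ range f) :
    IsNoetherian A M₂ :=
  have : IsNoetherian A (ker g) := isNoetherian_of_le h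
  isNoetherian_of_range_eq_ker (ker g).subtype g (range_subtype _)

variable (A) in
/-- `Extⁿ(N, M)` is a finitely generated `A`-module. -/
def ExtFinite (N M : Type u) [AddCommGroup N] [Module A N] [AddCommGroup M] [Module A M]
    (n : ℕ) : Prop :=
  Module.Finite A (Ext (ModuleCat.of A N) (ModuleCat.of A M) n)

variable {N M : Type u} [AddCommGroup N] [Module A N] [AddCommGroup M] [Module A M]

theorem finite_extModule_iff {N M : ModuleCat.{u} A} {n : ℕ} :
    Module.Finite A (extModule A n N M) ↔ ExtFinite A N M n :=
  Module.Finite.equiv_iff (extModuleLinearEquiv N M n)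

/-- The map `Extⁿ(N, X) → Extⁿ(N, Y)` induced by `f : X ⟶ Y`. -/
noncomputable abbrev extMap (N : Type u) [AddCommGroup N] [Module A N] {X Y : ModuleCat.{u} A}
    (f : X ⟶ Y) (n : ℕ) :
    Ext (ModuleCat.of A N) X n →ₗ[A] Ext (ModuleCat.of A N) Y n :=
  (Ext.mk₀ f).postcompOfLinear A (ModuleCat.of A N) (add_zero n)

theorem extMap_lsmul_eq_zero {x : A} (hx : x ∈ Module.annihilator A N) (n : ℕ) :
    extMap N (ModuleCat.ofHom (lsmul A M x)) n = 0 := by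
  ext α
  have h := Ext.postcomp_smul_id_eq_zero_of_mem_annihilator (N := ModuleCat.of A N)
    (M := ModuleCat.of A M) hx n
  rw [← ModuleCat.lsmul_eq_smul_id] at h
  exact congrArg (fun f ↦ f.hom α) h

theorem extMap_injective {X Y : ModuleCat.{u} A} (f : X ⟶ Y) [Mono f] :
    Function.Injective (extMap N f 0) :=
  Ext.postcomp_mk₀_injective_of_mono _ f

theorem exact_ker_subtype_rangeRestrict {M₁ M₂ : Type*} [AddCommGroup M₁] [AddCommGroup M₂]
    [Module A M₁] [Module A M₂] (f : M₁ →ₗ[A] M₂) :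
    Function.Exact (ker f).subtype f.rangeRestrict :=
  exact_iff.mpr (by rw [ker_rangeRestrict, range_subtype])

theorem shortExact_ker_range {M₁ M₂ : Type u} [AddCommGroup M₁] [AddCommGroup M₂] [Module A M₁]
    [Module A M₂] (f : M₁ →ₗ[A] M₂) :
    (ModuleCat.shortComplexOfCompEqZero (ker f).subtype f.rangeRestrict
      (exact_ker_subtype_rangeRestrict f).linearMap_comp_eq_zero).ShortExact :=
  ModuleCat.shortComplex_shortExact _ (exact_ker_subtype_rangeRestrict f) (injective_subtype _)
    f.surjective_rangeRestrict

theorem shortExact_submodule_quotient (L : Submodule A M) :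
    (ModuleCat.shortComplexOfCompEqZero L.subtype L.mkQ
      (exact_subtype_mkQ L).linearMap_comp_eq_zero).ShortExact :=
  ModuleCat.shortComplex_shortExact _ (exact_subtype_mkQ L) L.injective_subtype L.mkQ_surjective

variable (M) in
/-- Evaluation at `1` identifies `Hom(A ⧸ I, M)` with the submodule `0 :_M I`. -/
noncomputable def quotientHomEquivTorsionBySet (I : Ideal A) :
    ((A ⧸ I) →ₗ[A] M) ≃ₗ[A] torsionBySet A M (I : Set A) where
  toFun f := ⟨f 1, (mem_torsionBySet_iff _ _).mpr fun a ↦ by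
    rw [← map_smul, Module.mem_annihilator.mp (Ideal.annihilator_quotient.ge a.2), map_zero]⟩
  map_add' _ _ := rfl
  map_smul' _ _ := rfl
  invFun m := Submodule.liftQ I (toSpanSingleton A M m) fun a ha ↦
    (mem_torsionBySet_iff _ _).mp m.2 ⟨a, ha⟩
  left_inv f := by
    ext
    exact one_smul A (f 1)
  right_inv m := Subtype.ext (one_smul A m.1)

theorem extFinite_quotient_zero_iff (I : Ideal A) :
    ExtFinite A (A ⧸ I) M 0 ↔ (torsionBySet A M (I : Set A)).FG := by
  rw [← Module.Finite.iff_fg]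
  exact Module.Finite.equiv_iff <|
    Ext.linearEquiv₀ ≪≫ₗ ModuleCat.homLinearEquiv ≪≫ₗ quotientHomEquivTorsionBySet M I

variable [IsNoetherianRing A]

namespace ExtFinite

theorem of_finite [Module.Finite A N] [Module.Finite A M] (n : ℕ) : ExtFinite A N M n :=
  inferInstanceAs (Module.Finite A (Ext (ModuleCat.of A N) (ModuleCat.of A M) n))

theorem of_submodule (L : Submodule A M) (h : ExtFinite A N M 0) : ExtFinite A N L 0 :=
  have : Module.Finite A (Ext (ModuleCat.of A N) (ModuleCat.of A M) 0) := h
  have : Mono (ModuleCat.ofHom L.subtype) := (shortExact_submodule_quotient L).mono_f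
  Module.Finite.of_injective _ (extMap_injective (ModuleCat.ofHom L.subtype))

variable {S : ShortComplex (ModuleCat.{u} A)} {n : ℕ}

theorem of_shortExact₁ (hS : S.ShortExact) (h₂ : ExtFinite A N S.X₂ (n + 1))
    (h₃ : ExtFinite A N S.X₃ n) : ExtFinite A N S.X₁ (n + 1) := by
  unfold ExtFinite at *
  have := isNoetherian_of_ker_le_range
    (hS.extClass.postcompOfLinear A (ModuleCat.of A N) rfl) (extMap N S.f (n + 1))
    fun α hα ↦ Ext.covariant_sequence_exact₁ _ hS α hα rfl
  infer_instance

theorem of_shortExact₂ (hS : S.ShortExact) (h₁ : ExtFinite A N S.X₁ n)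
    (h₃ : ExtFinite A N S.X₃ n) : ExtFinite A N S.X₂ n := by
  unfold ExtFinite at *
  have := isNoetherian_of_ker_le_range (extMap N S.f n) (extMap N S.g n)
    fun α hα ↦ Ext.covariant_sequence_exact₂ _ hS α hα
  infer_instance

theorem of_shortExact₃ (hS : S.ShortExact) (h₁ : ExtFinite A N S.X₁ (n + 1))
    (h₂ : ExtFinite A N S.X₂ n) : ExtFinite A N S.X₃ n := by
  unfold ExtFinite at *
  have := isNoetherian_of_ker_le_range (extMap N S.g n)
    (hS.extClass.postcompOfLinear A (ModuleCat.of A N) rfl)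
    fun α hα ↦ Ext.covariant_sequence_exact₃ _ hS α rfl hα
  infer_instance

theorem isNoetherian_ker_extMap (hS : S.ShortExact) (h₃ : ∀ i < n, ExtFinite A N S.X₃ i) :
    IsNoetherian A (ker (extMap N S.f n)) := by
  cases n with
  | zero =>
    have : Mono S.f := hS.mono_f
    rw [ker_eq_bot.mpr (extMap_injective S.f)]
    infer_instance
  | succ n =>
    have : Module.Finite A (Ext (ModuleCat.of A N) S.X₃ n) := h₃ n n.lt_succ_self
    exact isNoetherian_of_le (t := range (hS.extClass.postcompOfLinear A (ModuleCat.of A N) rfl))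
      fun α hα ↦ Ext.covariant_sequence_exact₁ _ hS α hα rfl

-- `x` kills `Extⁿ(N, M)`, so the map induced by `M ↠ xM` lands in the kernel of the map induced
-- by `xM ↪ M`.
theorem of_ker_lsmul_of_quotient {x : A} (hx : x ∈ Module.annihilator A N)
    (hK : ExtFinite A N (ker (lsmul A M x)) n)
    (hQ : ∀ i < n, ExtFinite A N (M ⧸ range (lsmul A M x)) i) : ExtFinite A N M n := by
  let F := extMap N (ModuleCat.ofHom (lsmul A M x).rangeRestrict) n
  let G := extMap N (ModuleCat.ofHom (range (lsmul A M x)).subtype) n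
  have hFG : ∀ α, F α ∈ ker G := fun α ↦
    calc G (F α) = extMap N (ModuleCat.ofHom (lsmul A M x)) n α := by
          simp [F, G, Ext.mk₀_comp_mk₀, ← ModuleCat.ofHom_comp]
      _ = 0 := LinearMap.congr_fun (extMap_lsmul_eq_zero hx n) α
  have : IsNoetherian A (ker G) :=
    isNoetherian_ker_extMap (shortExact_submodule_quotient (range (lsmul A M x))) hQ
  unfold ExtFinite at *
  have := isNoetherian_of_ker_le_range
    (extMap N (ModuleCat.ofHom (ker (lsmul A M x)).subtype) n) (F.codRestrict _ hFG)
    fun α hα ↦ Ext.covariant_sequence_exact₂ _ (shortExact_ker_range (lsmul A M x)) α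
      (congrArg Subtype.val hα)
  infer_instance

end ExtFinite

end ExtFinite

/-! ### Dévissage -/

section Devissage

open LinearMap Submodule

variable {A : Type u} [CommRing A] [IsNoetherianRing A] {I : Ideal A} {S : Submonoid A}
  {P : ∀ (M : Type u) [AddCommGroup M] [Module A M], Prop}

theorem extFinite_of_smul_pow_smul_eq {x : A} (hx : x ∈ I)
    (extFinite_ker : ∀ (M : Type u) [AddCommGroup M] [Module A M], P M →
      ∀ n, ExtFinite A (A ⧸ I) (ker (lsmul A M x)) n)
    (range_lsmul : ∀ (M : Type u) [AddCommGroup M] [Module A M], P M → P (range (lsmul A M x)))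
    (extFinite_quotient : ∀ (M : Type u) [AddCommGroup M] [Module A M], P M →
      (∀ m : M, ∃ s ∈ S, ∃ m' : M, s • m = x • m') →
        ∀ n, ExtFinite A (A ⧸ I) (M ⧸ range (lsmul A M x)) n)
    {M : Type u} [AddCommGroup M] [Module A M] (hM : P M) (k : ℕ)
    (hk : ∀ m : M, ∃ s ∈ S, ∃ m' : M, s • x ^ k • m = x ^ (k + 1) • m') (n : ℕ) :
    ExtFinite A (A ⧸ I) M n := by
  induction k generalizing M n with
  | zero =>
    simp only [pow_zero, one_smul, zero_add, pow_one] at hk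
    exact .of_ker_lsmul_of_quotient (Ideal.annihilator_quotient.ge hx) (extFinite_ker M hM n)
      fun i _ ↦ extFinite_quotient M hM hk i
  | succ k ih =>
    refine .of_shortExact₂ (shortExact_ker_range (lsmul A M x)) (extFinite_ker M hM n)
      (ih (range_lsmul M hM) ?_ n)
    rintro ⟨_, m, rfl⟩
    obtain ⟨s, hs, m', h⟩ := hk m
    refine ⟨s, hs, ⟨_, m', rfl⟩, Subtype.ext ?_⟩
    change s • x ^ k • x • m = x ^ (k + 1) • x • m'
    rwa [smul_smul (x ^ k), smul_smul (x ^ (k + 1)), ← pow_succ, ← pow_succ]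

theorem extFinite_of_devissage
    (extFinite_zero : ∀ (M : Type u) [AddCommGroup M] [Module A M], P M →
      ExtFinite A (A ⧸ I) M 0)
    (stable : ∀ (M : Type u) [AddCommGroup M] [Module A M], P M → ∀ x ∈ I,
      ∃ k, ∀ m : M, ∃ s ∈ S, ∃ m' : M, s • x ^ k • m = x ^ (k + 1) • m')
    (ker_lsmul : ∀ (M : Type u) [AddCommGroup M] [Module A M], P M → ∀ x ∈ I,
      P (ker (lsmul A M x)))
    (range_lsmul : ∀ (M : Type u) [AddCommGroup M] [Module A M], P M → ∀ x ∈ I,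
      (∀ n, ExtFinite A (A ⧸ I) (ker (lsmul A M x)) n) → P (range (lsmul A M x)))
    (extFinite_quotient : ∀ (M : Type u) [AddCommGroup M] [Module A M], P M → ∀ x ∈ I,
      (∀ n, ExtFinite A (A ⧸ I) (ker (lsmul A M x)) n) →
      (∀ m : M, ∃ s ∈ S, ∃ m' : M, s • m = x • m') →
        ∀ n, ExtFinite A (A ⧸ I) (M ⧸ range (lsmul A M x)) n)
    {M : Type u} [AddCommGroup M] [Module A M] (hM : P M) (n : ℕ) :
    ExtFinite A (A ⧸ I) M n := by
  refine induction_on_annihilator I (C := fun M _ _ ↦ P M → ∀ n, ExtFinite A (A ⧸ I) M n)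
    ?_ ?_ M hM n
  · intro M _ _ hIM hM
    have hfg := (extFinite_quotient_zero_iff I).mp (extFinite_zero M hM)
    rw [torsionBySet_eq_top_of_le_annihilator hIM] at hfg
    have : Module.Finite A M := ⟨hfg⟩
    exact ExtFinite.of_finite
  · intro M _ _ x hx ih hM
    obtain ⟨k, hk⟩ := stable M hM x hx
    have hker : ∀ (L : Type u) [AddCommGroup L] [Module A L],
        Module.annihilator A M ≤ Module.annihilator A L ∧ P L →
          ∀ n, ExtFinite A (A ⧸ I) (ker (lsmul A L x)) n :=
      fun L _ _ hL ↦ ih L hL.1 (ker_lsmul L hL.2 x hx)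
    refine extFinite_of_smul_pow_smul_eq hx hker ?_
      (fun L _ _ hL ↦ extFinite_quotient L hL.2 x hx (hker L hL)) ⟨le_rfl, hM⟩ k hk
    exact fun L _ _ hL ↦ ⟨hL.1.trans (annihilator_le_of_injective _ (injective_subtype _)),
      range_lsmul L hL.2 x hx (hker L hL)⟩

theorem extFinite_of_isArtinian {M : Type u} [AddCommGroup M] [Module A M] (hM : IsArtinian A M)
    (h₀ : ExtFinite A (A ⧸ I) M 0) (n : ℕ) : ExtFinite A (A ⧸ I) M n := by
  refine extFinite_of_devissage (S := ⊥)
    (P := fun M _ _ ↦ IsArtinian A M ∧ ExtFinite A (A ⧸ I) M 0) (fun _ _ _ hM ↦ hM.2)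
    ?_ ?_ ?_ ?_ ⟨hM, h₀⟩ n
  · rintro M _ _ ⟨hM, -⟩ x -
    obtain ⟨k, hk⟩ := IsArtinian.range_smul_pow_stabilizes M x
    refine ⟨k, fun m ↦ ?_⟩
    obtain ⟨m', hm'⟩ := (hk _ k.le_succ).le ⟨m, rfl⟩
    exact ⟨1, rfl, m', (one_smul A _).trans hm'.symm⟩
  · exact fun M _ _ ⟨_, h₀⟩ x _ ↦ ⟨inferInstance, h₀.of_submodule _⟩
  · exact fun M _ _ ⟨_, h₀⟩ x _ _ ↦ ⟨inferInstance, h₀.of_submodule _⟩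
  · intro M _ _ _ x _ _ hsurj
    have htop : range (lsmul A M x) = ⊤ := by
      refine range_eq_top.mpr fun m ↦ ?_
      obtain ⟨_, rfl, m', h⟩ := hsurj m
      exact ⟨m', h.symm.trans (one_smul A m)⟩
    rw [htop]
    exact ExtFinite.of_finite

theorem isArtinian_of_forall_exists_smul_eq_zero (hdim : ringKrullDim (A ⧸ I) ≤ 1) {M : Type v}
    [AddCommGroup M] [Module A M] (hM : IsPowTorsion I M)
    (hfg : (torsionBySet A M (I : Set A)).FG)
    (hS : ∀ m : M, ∃ s ∈ minimalPrimesCompl I, s • m = 0) : IsArtinian A M := by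
  have : Module.Finite A (torsionBySet A M (I : Set A)) := Module.Finite.iff_fg.mpr hfg
  obtain ⟨w, hwS, hw⟩ := exists_mem_annihilator_of_forall_exists_smul_eq_zero
    (N := torsionBySet A M (I : Set A)) fun m ↦ (hS m).imp fun _ h ↦ ⟨h.1, Subtype.ext h.2⟩
  refine hM.isArtinian <| isArtinian_of_isMaximal_of_mem_support fun p hp ↦ ?_
  have hann := Module.annihilator_le_of_mem_support hp
  have hIp : I ≤ p.asIdeal := fun a ha ↦ hann <| Module.mem_annihilator.mpr fun m ↦
    torsionBySet_isTorsionBySet (I : Set A) (x := m) (a := ⟨a, ha⟩)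
  exact (mem_minimalPrimes_or_isMaximal hdim hIp).resolve_left fun hmin ↦ hwS _ hmin (hann hw)

theorem extFinite_of_isPowTorsion (hdim : ringKrullDim (A ⧸ I) ≤ 1) {M : Type u}
    [AddCommGroup M] [Module A M] (hM : IsPowTorsion I M) (h₀ : ExtFinite A (A ⧸ I) M 0)
    (h₁ : ExtFinite A (A ⧸ I) M 1) (n : ℕ) : ExtFinite A (A ⧸ I) M n := by
  have extFinite_range_one : ∀ {L : Type u} [AddCommGroup L] [Module A L] {x : A},
      ExtFinite A (A ⧸ I) L 1 → (∀ n, ExtFinite A (A ⧸ I) (ker (lsmul A L x)) n) →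
        ExtFinite A (A ⧸ I) (range (lsmul A L x)) 1 := fun h₁ hK ↦
    .of_shortExact₃ (shortExact_ker_range _) (hK 2) h₁
  refine extFinite_of_devissage (S := minimalPrimesCompl I) (P := fun M _ _ ↦
    IsPowTorsion I M ∧ ExtFinite A (A ⧸ I) M 0 ∧ ExtFinite A (A ⧸ I) M 1)
    (fun _ _ _ hM ↦ hM.2.1) ?_ ?_ ?_ ?_ ⟨hM, h₀, h₁⟩ n
  · rintro M _ _ ⟨hM, h₀, -⟩ x -
    have := hM.isArtinian_localizedModule ((extFinite_quotient_zero_iff I).mp h₀)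
    exact exists_smul_pow_smul_eq x
  · rintro M _ _ ⟨hM, h₀, h₁⟩ x -
    exact ⟨hM.of_injective _ (injective_subtype _), h₀.of_submodule _,
      .of_shortExact₁ (shortExact_ker_range (lsmul A M x)) h₁ (h₀.of_submodule _)⟩
  · rintro M _ _ ⟨hM, h₀, h₁⟩ x - hK
    exact ⟨hM.of_injective _ (injective_subtype _), h₀.of_submodule _, extFinite_range_one h₁ hK⟩
  · rintro M _ _ ⟨hM, h₀, h₁⟩ x - hK hS
    have hQ₀ : ExtFinite A (A ⧸ I) (M ⧸ range (lsmul A M x)) 0 :=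
      .of_shortExact₃ (shortExact_submodule_quotient _) (extFinite_range_one h₁ hK) h₀
    refine extFinite_of_isArtinian (isArtinian_of_forall_exists_smul_eq_zero hdim
      (hM.of_surjective _ (mkQ_surjective _)) ((extFinite_quotient_zero_iff I).mp hQ₀) ?_) hQ₀
    refine (mkQ_surjective _).forall.mpr fun m ↦ ?_
    obtain ⟨s, hs, m', h⟩ := hS m
    exact ⟨s, hs, (Submodule.Quotient.mk_eq_zero _).mpr ⟨m', h.symm⟩⟩

end Devissage

theorem stmt6_general [IsNoetherianRing R] (𝔞 : Ideal R) (M : ModuleCat.{u} R)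
    (hdim : ringKrullDim (R ⧸ 𝔞) ≤ 1)
    (hsupp : Module.support R M ⊆ PrimeSpectrum.zeroLocus (𝔞 : Set R))
    (h₀ : Module.Finite R (extModule R 0 (ModuleCat.of R (R ⧸ 𝔞)) M))
    (h₁ : Module.Finite R (extModule R 1 (ModuleCat.of R (R ⧸ 𝔞)) M)) :
    IsCofinite R 𝔞 M :=
  ⟨hsupp, fun n ↦ finite_extModule_iff.mpr <| extFinite_of_isPowTorsion hdim
    (.of_support_subset hsupp) (finite_extModule_iff.mp h₀) (finite_extModule_iff.mp h₁) n⟩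

theorem stmt6 [IsNoetherianRing R] (𝔞 : Ideal R) (M : ModuleCat.{u} R)
    (hdim : ringKrullDim (R ⧸ 𝔞) = 1)
    (hsupp : Module.support R M ⊆ PrimeSpectrum.zeroLocus (𝔞 : Set R))
    (h : ∀ i : ℕ, (i : ℕ∞) ≤ cohomologicalDim R 𝔞 M + 1 →
      Module.Finite R (extModule R i (ModuleCat.of R (R ⧸ 𝔞)) M)) :
    IsCofinite R 𝔞 M :=
  stmt6_general R 𝔞 M hdim.le hsupp (h 0 (by simp)) (h 1 (by simp))
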